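/- Discrete energy estimate: in the discrete upwind setting with N time steps, let q̄ ∈ (1,2] and κ > 1. Suppose ρ⁰_K ≥ 0 and fⁿ_K ≥ 0 for all K and n, let ρⁿ⁺¹ solve one step of the implicit upwind scheme with data ρⁿ, fⁿ, fluxes uⁿ and time step δ > 0 for each n ∈ {0,…,N−1}, set λⁿ := δ · max_K ((div uⁿ)_K)⁻ and Λ := exp(Σ_n λⁿ), and assume ((q̄−1)/q̄) λⁿ ≤ (κ−1)/κ for every n. Then there is a constant C depending only on q̄ such that Σ_{n=0}^{N−1} Σ_K |K| ((ρⁿ⁺¹_K+ρⁿ_K)/2)^{q̄−2} (ρⁿ⁺¹_K−ρⁿ_K)² + δ Σ_{n=0}^{N−1} Σ_K Σ_{L≠K} |K∣L| |uⁿ_{KL}| ((ρⁿ⁺¹_K+ρⁿ⁺¹_L)/2)^{q̄−2} (ρⁿ⁺¹_K−ρⁿ⁺¹_L)² ≤ C · Λ^{κ(q̄−1)} (1 + Σ_n λⁿ) ( ‖ρ⁰‖_{ℓ^{q̄}} + Σ_n δ ‖fⁿ‖_{ℓ^{q̄}} )^{q̄}, where any summand whose two ρ-values are both zero is interpreted as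 0. -/

import Mathlib

open Finset

/-!
The scheme preserves nonnegativity because net outflows, in particular that of the negative part of
the solution, sum to zero over the cells. Multiplying the scheme by `q ρ ^ (q - 1)` and summing over
the cells, the transport term becomes a divergence term plus the sum of the Bregman divergences of
`t ↦ t ^ q` along the edges, because the net outflow of `ρ ^ q` sums to zero. On `[0, x + y]` the
second derivative of `t ↦ t ^ q`, `q ≤ 2`, is at least its value at `x + y`, so each Bregman
divergence controls the weighted square of the jump. Discarding the divergences and using Hölder
gives a recursion for `‖ρⁿ‖`, which a discrete Grönwall argument turns into a uniform bound `M`;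
keeping them and telescoping bounds the energy by a multiple of `(1 + ∑ λⁿ) M ^ q`.
-/

section Bregman

variable {q x y : ℝ}

lemma rpow_sub_one_mul_self (hx : 0 ≤ x) (hq : q ≠ 0) : x ^ (q - 1) * x = x ^ q := by
  rw [← Real.rpow_add_one' hx (by simpa using hq), sub_add_cancel]

lemma deriv_mul_sub_le_of_convexOn {s : Set ℝ} {g : ℝ → ℝ} {g' : ℝ} (hg : ConvexOn ℝ s g)
    (hx : x ∈ s) (hy : y ∈ s) (hd : HasDerivAt g g' y) : g' * (x - y) ≤ g x - g y := by
  rcases lt_trichotomy y x with hyx | rfl | hxy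
  · have hslope := hg.le_slope_of_hasDerivAt hy hx hyx hd
    rwa [slope_def_field, le_div_iff₀ (sub_pos.2 hyx)] at hslope
  · simp
  · have hslope := hg.slope_le_of_hasDerivAt hx hy hxy hd
    rw [slope_def_field, div_le_iff₀ (sub_pos.2 hxy)] at hslope
    linarith

lemma sq_sub_le_of_strongConvexOn {s : Set ℝ} {m : ℝ} {g : ℝ → ℝ} {g' : ℝ}
    (hg : StrongConvexOn s m g) (hx : x ∈ s) (hy : y ∈ s) (hd : HasDerivAt g g' y) :
    m / 2 * (x - y) ^ 2 ≤ g x - g y - g' * (x - y) := by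
  have hconv := strongConvexOn_iff_convex.1 hg
  simp only [Real.norm_eq_abs, sq_abs] at hconv
  have htangent := deriv_mul_sub_le_of_convexOn hconv hx hy
    (hd.sub ((hasDerivAt_pow 2 y).const_mul (m / 2)))
  norm_num at htangent
  linarith

lemma strongConvexOn_rpow_Icc (hq1 : 1 ≤ q) (hq2 : q ≤ 2) (R : ℝ) :
    StrongConvexOn (Set.Icc 0 R) (q * (q - 1) * R ^ (q - 2)) fun t => t ^ q := by
  rw [strongConvexOn_iff_convex]
  simp only [Real.norm_eq_abs, sq_abs]
  refine convexOn_of_hasDerivWithinAt2_nonneg (convex_Icc 0 R)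
    (f' := fun t => q * t ^ (q - 1) - q * (q - 1) * R ^ (q - 2) * t)
    (f'' := fun t => q * (q - 1) * t ^ (q - 2) - q * (q - 1) * R ^ (q - 2)) ?_ ?_ ?_ ?_
  · exact ((Real.continuous_rpow_const (by linarith)).sub (by fun_prop)).continuousOn
  · intro t _
    refine (((Real.hasDerivAt_rpow_const (Or.inr hq1)).sub
      ((hasDerivAt_pow 2 t).const_mul _)).congr_deriv ?_).hasDerivWithinAt
    norm_num
    ring
  · intro t ht
    rw [interior_Icc] at ht
    refine ((((Real.hasDerivAt_rpow_const (p := q - 1) (Or.inl ht.1.ne')).const_mul q).sub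
      ((hasDerivAt_id t).const_mul _)).congr_deriv ?_).hasDerivWithinAt
    rw [show q - 1 - 1 = q - 2 by ring]
    ring
  · intro t ht
    rw [interior_Icc] at ht
    have hdecr : R ^ (q - 2) ≤ t ^ (q - 2) :=
      Real.rpow_le_rpow_of_nonpos ht.1 ht.2.le (by linarith)
    have hcoef : 0 ≤ q * (q - 1) := mul_nonneg (by linarith) (by linarith)
    exact sub_nonneg.2 (mul_le_mul_of_nonneg_left hdecr hcoef)

/-- The Bregman divergence `φ x - φ y - φ' y * (x - y)` of `φ t = t ^ q`. -/
noncomputable def rpowBregman (q x y : ℝ) : ℝ := x ^ q - y ^ q - q * y ^ (q - 1) * (x - y)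

/-- The squared jump `(x - y) ^ 2` with the weight of the energy estimate. It is `0` for
`x = y = 0`, whatever the value of `0 ^ (q - 2)`. -/
noncomputable def rpowJump (q x y : ℝ) : ℝ := ((x + y) / 2) ^ (q - 2) * (x - y) ^ 2

/-- The constant with which the Bregman divergence of `t ↦ t ^ q` controls `rpowJump q`. -/
noncomputable def rpowCoercivity (q : ℝ) : ℝ := q * (q - 1) / 2 * 2 ^ (q - 2)

lemma rpowCoercivity_pos (hq : 1 < q) : 0 < rpowCoercivity q := by
  have : 0 < q - 1 := sub_pos.2 hq
  unfold rpowCoercivity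
  positivity

lemma rpowJump_comm (q x y : ℝ) : rpowJump q x y = rpowJump q y x := by
  unfold rpowJump
  rw [add_comm x y, sub_sq_comm x y]

lemma rpowJump_nonneg (hx : 0 ≤ x) (hy : 0 ≤ y) : 0 ≤ rpowJump q x y := by
  unfold rpowJump
  positivity

lemma rpowBregman_nonneg (hq : 1 ≤ q) (hx : 0 ≤ x) (hy : 0 ≤ y) : 0 ≤ rpowBregman q x y :=
  sub_nonneg.2 <| deriv_mul_sub_le_of_convexOn (convexOn_rpow hq) hx hy
    (Real.hasDerivAt_rpow_const (Or.inr hq))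

lemma rpowCoercivity_mul_rpowJump_le (hq1 : 1 ≤ q) (hq2 : q ≤ 2) (hx : 0 ≤ x) (hy : 0 ≤ y) :
    rpowCoercivity q * rpowJump q x y ≤ rpowBregman q x y := by
  have hconvex := sq_sub_le_of_strongConvexOn (strongConvexOn_rpow_Icc hq1 hq2 (x + y))
    ⟨hx, le_add_of_nonneg_right hy⟩ ⟨hy, le_add_of_nonneg_left hx⟩
    (Real.hasDerivAt_rpow_const (Or.inr hq1))
  refine le_of_eq_of_le ?_ hconvex
  have hscale : (2 : ℝ) ^ (q - 2) * ((x + y) / 2) ^ (q - 2) = (x + y) ^ (q - 2) := by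
    rw [← Real.mul_rpow zero_le_two (by positivity), mul_div_cancel₀ _ two_ne_zero]
  rw [← hscale, rpowCoercivity, rpowJump]
  ring

end Bregman

section CellNorm

variable {ι : Type*} [Fintype ι] {vol : ι → ℝ} {p q : ℝ}

/-- The discrete `ℓ^q` norm on a mesh with cell volumes `vol`. -/
noncomputable def cellNorm (vol : ι → ℝ) (q : ℝ) (v : ι → ℝ) : ℝ :=
  (∑ K, vol K * |v K| ^ q) ^ (1 / q)

lemma sum_vol_mul_abs_rpow_nonneg (hvol : ∀ K, 0 ≤ vol K) (q : ℝ) (v : ι → ℝ) :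
    0 ≤ ∑ K, vol K * |v K| ^ q :=
  sum_nonneg fun K _ => mul_nonneg (hvol K) (Real.rpow_nonneg (abs_nonneg _) _)

lemma cellNorm_nonneg (hvol : ∀ K, 0 ≤ vol K) (q : ℝ) (v : ι → ℝ) : 0 ≤ cellNorm vol q v :=
  Real.rpow_nonneg (sum_vol_mul_abs_rpow_nonneg hvol q v) _

lemma cellNorm_rpow (hvol : ∀ K, 0 ≤ vol K) (hq : q ≠ 0) (v : ι → ℝ) :
    cellNorm vol q v ^ q = ∑ K, vol K * |v K| ^ q := by
  rw [cellNorm, ← Real.rpow_mul (sum_vol_mul_abs_rpow_nonneg hvol q v), one_div_mul_cancel hq,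
    Real.rpow_one]

lemma cellNorm_rpow_of_nonneg (hvol : ∀ K, 0 ≤ vol K) (hq : q ≠ 0) {v : ι → ℝ}
    (hv : ∀ K, 0 ≤ v K) : cellNorm vol q v ^ q = ∑ K, vol K * v K ^ q := by
  simp only [cellNorm_rpow hvol hq, abs_of_nonneg (hv _)]

lemma sum_vol_mul_mul_le_cellNorm_mul_cellNorm (hpq : p.HolderConjugate q)
    (hvol : ∀ K, 0 ≤ vol K) (f g : ι → ℝ) :
    ∑ K, vol K * f K * g K ≤ cellNorm vol p f * cellNorm vol q g := by
  have hsplit (K : ι) : vol K ^ (1 / p) * f K * (vol K ^ (1 / q) * g K) = vol K * f K * g K := by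
    have hone : 1 / p + 1 / q = 1 := by simpa only [one_div] using hpq.inv_add_inv_eq_one
    rw [mul_mul_mul_comm, ← Real.rpow_add' (hvol K) (hone.trans_ne one_ne_zero), hone,
      Real.rpow_one, mul_assoc]
  have hpow {t : ℝ} (ht : t ≠ 0) (v : ι → ℝ) (K : ι) :
      |vol K ^ (1 / t) * v K| ^ t = vol K * |v K| ^ t := by
    rw [abs_mul, abs_of_nonneg (Real.rpow_nonneg (hvol K) _),
      Real.mul_rpow (Real.rpow_nonneg (hvol K) _) (abs_nonneg _), ← Real.rpow_mul (hvol K),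
      one_div_mul_cancel ht, Real.rpow_one]
  have hholder := Real.inner_le_Lp_mul_Lq univ (fun K => vol K ^ (1 / p) * f K)
    (fun K => vol K ^ (1 / q) * g K) hpq
  simpa only [cellNorm, hsplit, hpow hpq.ne_zero, hpow hpq.symm.ne_zero] using hholder

lemma cellNorm_conjExponent_rpow_sub_one (hvol : ∀ K, 0 ≤ vol K) (hq : 1 < q) {v : ι → ℝ}
    (hv : ∀ K, 0 ≤ v K) :
    cellNorm vol q.conjExponent (fun K => v K ^ (q - 1)) = cellNorm vol q v ^ (q - 1) := by
  have hq0 : q ≠ 0 := by positivity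
  have hq1 : q - 1 ≠ 0 := (sub_pos.2 hq).ne'
  rw [cellNorm, cellNorm, ← Real.rpow_mul (sum_vol_mul_abs_rpow_nonneg hvol q v)]
  congr 1
  · refine sum_congr rfl fun K _ => ?_
    rw [abs_of_nonneg (Real.rpow_nonneg (hv K) _), abs_of_nonneg (hv K), ← Real.rpow_mul (hv K),
      Real.conjExponent, mul_div_cancel₀ _ hq1]
  · rw [Real.conjExponent]
    field_simp

lemma sum_vol_mul_mul_rpow_sub_one_le (hvol : ∀ K, 0 ≤ vol K) (hq : 1 < q) (f : ι → ℝ)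
    {v : ι → ℝ} (hv : ∀ K, 0 ≤ v K) :
    ∑ K, vol K * f K * v K ^ (q - 1) ≤ cellNorm vol q f * cellNorm vol q v ^ (q - 1) := by
  rw [← cellNorm_conjExponent_rpow_sub_one hvol hq hv]
  exact sum_vol_mul_mul_le_cellNorm_mul_cellNorm (.conjExponent hq) hvol f _

end CellNorm

section ImplicitStep

variable {ι : Type*} [Fintype ι] {vol : ι → ℝ} {p : ι → ι → ℝ} {f r s : ι → ℝ} {q δ lam : ℝ}

/-- The net mass leaving the cell `K` per unit time, when a density `r` is transported at the rate
`p K L` from `K` to `L`. For `r = 1` it is the divergence of the flux, times the cell volume. -/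
def netOutflow (p : ι → ι → ℝ) (r : ι → ℝ) (K : ι) : ℝ := ∑ L, (p K L * r K - p L K * r L)

lemma sum_netOutflow (p : ι → ι → ℝ) (r : ι → ℝ) : ∑ K, netOutflow p r K = 0 := by
  simp only [netOutflow, sum_sub_distrib]
  rw [sub_eq_zero, sum_comm]

lemma sum_rpow_mul_netOutflow (hq : q ≠ 0) (hr : ∀ K, 0 ≤ r K) :
    q * ∑ K, r K ^ (q - 1) * netOutflow p r K =
      (q - 1) * ∑ K, r K ^ q * netOutflow p 1 K
        + ∑ K, ∑ L, p L K * rpowBregman q (r L) (r K) := by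
  rw [← sub_eq_zero, ← sum_netOutflow p fun K => r K ^ q]
  simp only [netOutflow, mul_sum, ← sum_add_distrib, ← sum_sub_distrib]
  refine sum_congr rfl fun K _ => sum_congr rfl fun L _ => ?_
  rw [rpowBregman, Pi.one_apply, Pi.one_apply, ← rpow_sub_one_mul_self (hr K) hq]
  ring

/-- The density `r` arises from `s` by one implicit Euler step of length `δ` of transport at the
rates `p` with source `f`; each cell balance is multiplied by `δ` and the cell volume. -/
def IsImplicitStep (vol : ι → ℝ) (δ : ℝ) (p : ι → ι → ℝ) (f s r : ι → ℝ) : Prop :=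
  ∀ K, vol K * (r K - s K) + δ * netOutflow p r K = δ * (vol K * f K)

/-- The energy dissipated in time by a step from `s` to `r`. -/
noncomputable def temporalEnergy (vol : ι → ℝ) (q : ℝ) (s r : ι → ℝ) : ℝ :=
  ∑ K, vol K * rpowJump q (r K) (s K)

/-- The energy dissipated per unit time by the jumps of `r` across the edges, each ordered pair of
cells being counted with the rates in both directions. -/
noncomputable def spatialEnergy (p : ι → ι → ℝ) (q : ℝ) (r : ι → ℝ) : ℝ :=
  ∑ K, ∑ L, (p K L + p L K) * rpowJump q (r K) (r L)

lemma spatialEnergy_eq_two_mul (p : ι → ι → ℝ) (q : ℝ) (r : ι → ℝ) :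
    spatialEnergy p q r = 2 * ∑ K, ∑ L, p L K * rpowJump q (r L) (r K) := by
  have hsym : ∑ K, ∑ L, p K L * rpowJump q (r K) (r L)
      = ∑ K, ∑ L, p L K * rpowJump q (r L) (r K) := sum_comm
  simp only [spatialEnergy, add_mul, sum_add_distrib]
  rw [hsym, two_mul]
  simp only [rpowJump_comm q (r _) (r _)]

lemma temporalEnergy_nonneg (hvol : ∀ K, 0 ≤ vol K) (hs : ∀ K, 0 ≤ s K) (hr : ∀ K, 0 ≤ r K) :
    0 ≤ temporalEnergy vol q s r :=
  sum_nonneg fun K _ => mul_nonneg (hvol K) (rpowJump_nonneg (hr K) (hs K))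

lemma rpowCoercivity_mul_temporalEnergy_le (hq1 : 1 ≤ q) (hq2 : q ≤ 2) (hvol : ∀ K, 0 ≤ vol K)
    (hs : ∀ K, 0 ≤ s K) (hr : ∀ K, 0 ≤ r K) :
    rpowCoercivity q * temporalEnergy vol q s r ≤ ∑ K, vol K * rpowBregman q (s K) (r K) := by
  rw [temporalEnergy, mul_sum]
  refine sum_le_sum fun K _ => ?_
  rw [rpowJump_comm, mul_left_comm]
  exact mul_le_mul_of_nonneg_left (rpowCoercivity_mul_rpowJump_le hq1 hq2 (hs K) (hr K)) (hvol K)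

lemma rpowCoercivity_mul_spatialEnergy_le (hq1 : 1 ≤ q) (hq2 : q ≤ 2) (hp : ∀ K L, 0 ≤ p K L)
    (hr : ∀ K, 0 ≤ r K) :
    rpowCoercivity q * spatialEnergy p q r
      ≤ 2 * ∑ K, ∑ L, p L K * rpowBregman q (r L) (r K) := by
  rw [spatialEnergy_eq_two_mul, mul_left_comm]
  gcongr 2 * ?_
  simp only [mul_sum]
  refine sum_le_sum fun K _ => sum_le_sum fun L _ => ?_
  rw [mul_left_comm]
  exact mul_le_mul_of_nonneg_left (rpowCoercivity_mul_rpowJump_le hq1 hq2 (hr L) (hr K)) (hp L K)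

namespace IsImplicitStep

lemma nonneg (h : IsImplicitStep vol δ p f s r) (hvol : ∀ K, 0 < vol K) (hδ : 0 ≤ δ)
    (hp : ∀ K L, 0 ≤ p K L) (hf : ∀ K, 0 ≤ f K) (hs : ∀ K, 0 ≤ s K) (K : ι) : 0 ≤ r K := by
  have hcell (K : ι) : vol K * (r K)⁻ + δ * netOutflow p (fun L => (r L)⁻) K ≤ 0 := by
    rcases le_total 0 (r K) with hK | hK
    · have hinflow : netOutflow p (fun L => (r L)⁻) K ≤ 0 := by
        refine sum_nonpos fun L _ => ?_
        simp only [negPart_eq_zero.2 hK, mul_zero, zero_sub, neg_nonpos]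
        exact mul_nonneg (hp L K) (negPart_nonneg _)
      rw [negPart_eq_zero.2 hK, mul_zero, zero_add]
      exact mul_nonpos_of_nonneg_of_nonpos hδ hinflow
    · have houtflow : netOutflow p (fun L => (r L)⁻) K ≤ -netOutflow p r K := by
        rw [netOutflow, netOutflow, ← sum_neg_distrib]
        refine sum_le_sum fun L _ => ?_
        have := mul_le_mul_of_nonneg_left (neg_le_negPart (r L)) (hp L K)
        rw [negPart_eq_neg.2 hK]
        linarith
      have hdata : 0 ≤ vol K * s K + δ * (vol K * f K) :=
        add_nonneg (mul_nonneg (hvol K).le (hs K))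
          (mul_nonneg hδ (mul_nonneg (hvol K).le (hf K)))
      have := mul_le_mul_of_nonneg_left houtflow hδ
      rw [negPart_eq_neg.2 hK]
      linarith [h K]
  have hsum : ∑ K, vol K * (r K)⁻ ≤ 0 := by
    have := sum_nonpos fun K (_ : K ∈ univ) => hcell K
    rwa [sum_add_distrib, ← mul_sum, sum_netOutflow, mul_zero, add_zero] at this
  have hnonneg (K : ι) : 0 ≤ vol K * (r K)⁻ := mul_nonneg (hvol K).le (negPart_nonneg _)
  have hzero : vol K * (r K)⁻ = 0 :=
    (hnonneg K).antisymm' <| (single_le_sum (fun L _ => hnonneg L) (mem_univ K)).trans hsum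
  exact negPart_eq_zero.1 ((mul_eq_zero.1 hzero).resolve_left (hvol K).ne')

lemma sum_mul_rpow_sub_one_le (h : IsImplicitStep vol δ p f s r) (hq : 1 ≤ q)
    (hr : ∀ K, 0 ≤ r K) (hlam : ∀ K, -(δ * netOutflow p 1 K) ≤ lam * vol K) :
    q * ∑ K, vol K * (r K - s K) * r K ^ (q - 1)
        + δ * ∑ K, ∑ L, p L K * rpowBregman q (r L) (r K)
      ≤ q * (δ * ∑ K, vol K * f K * r K ^ (q - 1)) + (q - 1) * lam * ∑ K, vol K * r K ^ q := by
  have htested : ∑ K, vol K * (r K - s K) * r K ^ (q - 1)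
      + δ * ∑ K, r K ^ (q - 1) * netOutflow p r K = δ * ∑ K, vol K * f K * r K ^ (q - 1) := by
    simp only [mul_sum, ← sum_add_distrib]
    refine sum_congr rfl fun K _ => ?_
    linear_combination r K ^ (q - 1) * h K
  have hcompression :
      -(δ * ∑ K, r K ^ q * netOutflow p 1 K) ≤ lam * ∑ K, vol K * r K ^ q := by
    simp only [mul_sum, ← sum_neg_distrib]
    refine sum_le_sum fun K _ => ?_
    linarith [mul_le_mul_of_nonneg_right (hlam K) (Real.rpow_nonneg (hr K) q)]
  have htransport := sum_rpow_mul_netOutflow (p := p) (by positivity : q ≠ 0) hr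
  linear_combination q * htested + (q - 1) * hcompression - δ * htransport

lemma cellNorm_mul_one_sub_le (h : IsImplicitStep vol δ p f s r) (hq : 1 < q)
    (hvol : ∀ K, 0 ≤ vol K) (hδ : 0 ≤ δ) (hp : ∀ K L, 0 ≤ p K L) (hr : ∀ K, 0 ≤ r K)
    (hlam : ∀ K, -(δ * netOutflow p 1 K) ≤ lam * vol K) :
    cellNorm vol q r * (1 - (q - 1) / q * lam) ≤ cellNorm vol q s + δ * cellNorm vol q f := by
  have hq0 : 0 < q := by positivity
  have hrhs : 0 ≤ cellNorm vol q s + δ * cellNorm vol q f :=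
    add_nonneg (cellNorm_nonneg hvol q s) (mul_nonneg hδ (cellNorm_nonneg hvol q f))
  have hdissipation : 0 ≤ δ * ∑ K, ∑ L, p L K * rpowBregman q (r L) (r K) :=
    mul_nonneg hδ <| sum_nonneg fun K _ => sum_nonneg fun L _ =>
      mul_nonneg (hp L K) (rpowBregman_nonneg hq.le (hr L) (hr K))
  have hincrement : ∑ K, vol K * (r K - s K) * r K ^ (q - 1)
      = cellNorm vol q r ^ q - ∑ K, vol K * s K * r K ^ (q - 1) := by
    rw [cellNorm_rpow_of_nonneg hvol hq0.ne' hr, ← sum_sub_distrib]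
    refine sum_congr rfl fun K _ => ?_
    rw [← rpow_sub_one_mul_self (hr K) hq0.ne']
    ring
  have htested := h.sum_mul_rpow_sub_one_le hq.le hr hlam
  rw [hincrement, ← cellNorm_rpow_of_nonneg hvol hq0.ne' hr] at htested
  have hold := sum_vol_mul_mul_rpow_sub_one_le hvol hq s hr
  have hsource := mul_le_mul_of_nonneg_left (sum_vol_mul_mul_rpow_sub_one_le hvol hq f hr) hδ
  rcases (cellNorm_nonneg hvol q r).eq_or_lt with hzero | hpos
  · rwa [← hzero, zero_mul]
  · refine le_of_mul_le_mul_left ?_ (mul_pos hq0 (Real.rpow_pos_of_pos hpos (q - 1)))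
    calc q * cellNorm vol q r ^ (q - 1) * (cellNorm vol q r * (1 - (q - 1) / q * lam))
        = q * cellNorm vol q r ^ q - (q - 1) * lam * cellNorm vol q r ^ q := by
          rw [← rpow_sub_one_mul_self hpos.le hq0.ne']
          field_simp
      _ ≤ q * (cellNorm vol q s * cellNorm vol q r ^ (q - 1)
            + δ * (cellNorm vol q f * cellNorm vol q r ^ (q - 1))) := by
          linarith [mul_le_mul_of_nonneg_left hold hq0.le,
            mul_le_mul_of_nonneg_left hsource hq0.le]
      _ = q * cellNorm vol q r ^ (q - 1) * (cellNorm vol q s + δ * cellNorm vol q f) := by ring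

lemma energy_le (h : IsImplicitStep vol δ p f s r) (hq1 : 1 < q) (hq2 : q ≤ 2)
    (hvol : ∀ K, 0 ≤ vol K) (hδ : 0 ≤ δ) (hp : ∀ K L, 0 ≤ p K L) (hs : ∀ K, 0 ≤ s K)
    (hr : ∀ K, 0 ≤ r K) (hlam : ∀ K, -(δ * netOutflow p 1 K) ≤ lam * vol K) :
    rpowCoercivity q / 2 * (temporalEnergy vol q s r + δ * spatialEnergy p q r)
      ≤ cellNorm vol q s ^ q - cellNorm vol q r ^ q
        + q * (δ * cellNorm vol q f) * cellNorm vol q r ^ (q - 1)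
        + (q - 1) * lam * cellNorm vol q r ^ q := by
  have hq0 : 0 < q := by positivity
  have hincrement : q * ∑ K, vol K * (r K - s K) * r K ^ (q - 1)
      = cellNorm vol q r ^ q - cellNorm vol q s ^ q
        + ∑ K, vol K * rpowBregman q (s K) (r K) := by
    rw [cellNorm_rpow_of_nonneg hvol hq0.ne' hr, cellNorm_rpow_of_nonneg hvol hq0.ne' hs, mul_sum,
      ← sum_sub_distrib, ← sum_add_distrib]
    refine sum_congr rfl fun K _ => ?_
    rw [rpowBregman]
    ring
  have htested := h.sum_mul_rpow_sub_one_le hq1.le hr hlam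
  rw [hincrement, ← cellNorm_rpow_of_nonneg hvol hq0.ne' hr] at htested
  have hsource := mul_le_mul_of_nonneg_left
    (sum_vol_mul_mul_rpow_sub_one_le hvol hq1 f hr) (mul_nonneg hq0.le hδ)
  have htemporal := rpowCoercivity_mul_temporalEnergy_le hq1.le hq2 hvol hs hr
  have htemporal_nonneg : 0 ≤ rpowCoercivity q * temporalEnergy vol q s r :=
    mul_nonneg (rpowCoercivity_pos hq1).le (temporalEnergy_nonneg hvol hs hr)
  have hspatial := mul_le_mul_of_nonneg_left
    (rpowCoercivity_mul_spatialEnergy_le hq1.le hq2 hp hr) hδ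
  linarith

end IsImplicitStep

end ImplicitStep

section Recursion

variable {N : ℕ} {x a b e lam : ℕ → ℝ}

lemma one_le_exp_mul_one_sub {κ t : ℝ} (hκ : 0 < κ) (ht0 : 0 ≤ t) (ht : t ≤ (κ - 1) / κ) :
    1 ≤ Real.exp (κ * t) * (1 - t) := by
  have hκt : κ * t ≤ κ - 1 := by rwa [le_div_iff₀' hκ] at ht
  have ht1 : 0 ≤ 1 - t := sub_nonneg.2 <| ht.trans <| div_le_one_of_le₀ (by linarith) hκ.le
  calc (1 : ℝ) ≤ (κ * t + 1) * (1 - t) := by nlinarith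
    _ ≤ Real.exp (κ * t) * (1 - t) :=
        mul_le_mul_of_nonneg_right (Real.add_one_le_exp _) ht1

lemma le_exp_sum_mul_of_le_exp_mul_add (ha : ∀ n < N, 0 ≤ a n) (hb : ∀ n < N, 0 ≤ b n)
    (hx : ∀ n < N, x (n + 1) ≤ Real.exp (a n) * (x n + b n)) :
    x N ≤ Real.exp (∑ n ∈ range N, a n) * (x 0 + ∑ n ∈ range N, b n) := by
  induction N with
  | zero => simp
  | succ N ih =>
    have hprev := ih (fun n hn => ha n (by omega)) (fun n hn => hb n (by omega))
      (fun n hn => hx n (by omega))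
    have hexp : 1 ≤ Real.exp (∑ n ∈ range N, a n) :=
      Real.one_le_exp <| sum_nonneg fun n hn => ha n ((mem_range.1 hn).trans N.lt_succ_self)
    have hlast := le_mul_of_one_le_left (hb N N.lt_succ_self) hexp
    rw [sum_range_succ, sum_range_succ, add_comm (∑ n ∈ range N, a n), Real.exp_add, mul_assoc]
    refine (hx N N.lt_succ_self).trans (mul_le_mul_of_nonneg_left ?_ (Real.exp_pos _).le)
    linarith

lemma le_exp_sum_range_mul_of_le_exp_mul_add (hx0 : 0 ≤ x 0) (ha : ∀ n < N, 0 ≤ a n)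
    (hb : ∀ n < N, 0 ≤ b n) (hx : ∀ n < N, x (n + 1) ≤ Real.exp (a n) * (x n + b n)) {n : ℕ}
    (hn : n ≤ N) : x n ≤ Real.exp (∑ i ∈ range N, a i) * (x 0 + ∑ i ∈ range N, b i) := by
  have hmono {c : ℕ → ℝ} (hc : ∀ i < N, 0 ≤ c i) : ∑ i ∈ range n, c i ≤ ∑ i ∈ range N, c i :=
    sum_le_sum_of_subset_of_nonneg (range_subset_range.2 hn) fun i hi _ => hc i (mem_range.1 hi)
  have hsum : 0 ≤ ∑ i ∈ range n, b i :=
    sum_nonneg fun i hi => hb i ((mem_range.1 hi).trans_le hn)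
  calc x n ≤ Real.exp (∑ i ∈ range n, a i) * (x 0 + ∑ i ∈ range n, b i) :=
        le_exp_sum_mul_of_le_exp_mul_add (fun i hi => ha i (hi.trans_le hn))
          (fun i hi => hb i (hi.trans_le hn)) (fun i hi => hx i (hi.trans_le hn))
    _ ≤ _ := by gcongr ?_ * (_ + ?_) <;> [exact Real.exp_le_exp.2 (hmono ha); exact hmono hb]

lemma sum_le_of_rpow_recursion {q M : ℝ} (hq : 1 ≤ q) (hx : ∀ n ≤ N, 0 ≤ x n)
    (hb : ∀ n < N, 0 ≤ b n) (hlam : ∀ n < N, 0 ≤ lam n) (hxM : ∀ n ≤ N, x n ≤ M)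
    (hbM : ∑ n ∈ range N, b n ≤ M)
    (he : ∀ n < N, e n ≤ x n ^ q - x (n + 1) ^ q + q * b n * x (n + 1) ^ (q - 1)
      + (q - 1) * lam n * x (n + 1) ^ q) :
    ∑ n ∈ range N, e n ≤ (1 + q) * (1 + ∑ n ∈ range N, lam n) * M ^ q := by
  have hM : 0 ≤ M := (hx 0 N.zero_le).trans (hxM 0 N.zero_le)
  have hpow {t : ℝ} (ht : 0 ≤ t) {n : ℕ} (hn : n ≤ N) : x n ^ t ≤ M ^ t :=
    Real.rpow_le_rpow (hx n hn) (hxM n hn) ht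
  have hstep (n : ℕ) (hn : n ∈ range N) :
      e n ≤ x n ^ q - x (n + 1) ^ q + q * M ^ (q - 1) * b n + (q - 1) * M ^ q * lam n := by
    rw [mem_range] at hn
    have hsource := mul_le_mul_of_nonneg_left (hpow (sub_nonneg.2 hq) hn)
      (mul_nonneg (by positivity : 0 ≤ q) (hb n hn))
    have hcompression := mul_le_mul_of_nonneg_left (hpow (by positivity : 0 ≤ q) hn)
      (mul_nonneg (sub_nonneg.2 hq) (hlam n hn))
    linarith [he n hn]
  have hsum := sum_le_sum hstep
  rw [sum_add_distrib, sum_add_distrib, sum_range_sub', ← mul_sum, ← mul_sum] at hsum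
  have hsource : q * M ^ (q - 1) * ∑ n ∈ range N, b n ≤ q * M ^ q := by
    rw [← rpow_sub_one_mul_self hM (by positivity : q ≠ 0), ← mul_assoc]
    gcongr
  have hfirst := hpow (by positivity : 0 ≤ q) N.zero_le
  have hlast := Real.rpow_nonneg (hx N le_rfl) q
  have hcompression : 0 ≤ (∑ n ∈ range N, lam n) * M ^ q :=
    mul_nonneg (sum_nonneg fun n hn => hlam n (mem_range.1 hn)) (Real.rpow_nonneg hM q)
  linarith

end Recursion

/-- Nonnegative data and `N` implicit Euler steps of transport at the nonnegative rates `p n`. -/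
structure IsNonnegTransport {ι : Type*} [Fintype ι] (vol : ι → ℝ) (δ : ℝ) (N : ℕ)
    (p : ℕ → ι → ι → ℝ) (f ρ : ℕ → ι → ℝ) : Prop where
  vol_pos : ∀ K, 0 < vol K
  timeStep_nonneg : 0 ≤ δ
  rate_nonneg : ∀ n < N, ∀ K L, 0 ≤ p n K L
  source_nonneg : ∀ n < N, ∀ K, 0 ≤ f n K
  init_nonneg : ∀ K, 0 ≤ ρ 0 K
  step : ∀ n < N, IsImplicitStep vol δ (p n) (f n) (ρ n) (ρ (n + 1))

namespace IsNonnegTransport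

variable {ι : Type*} [Fintype ι] {vol : ι → ℝ} {δ : ℝ} {N : ℕ} {p : ℕ → ι → ι → ℝ}
  {f ρ : ℕ → ι → ℝ} {q κ : ℝ} {lam : ℕ → ℝ}

lemma nonneg (h : IsNonnegTransport vol δ N p f ρ) {n : ℕ} (hn : n ≤ N) : ∀ K, 0 ≤ ρ n K := by
  induction n with
  | zero => exact h.init_nonneg
  | succ n ih =>
    exact (h.step n hn).nonneg h.vol_pos h.timeStep_nonneg (h.rate_nonneg n hn)
      (h.source_nonneg n hn) (ih (by omega))

lemma timeStep_mul_cellNorm_nonneg (h : IsNonnegTransport vol δ N p f ρ) (n : ℕ) :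
    0 ≤ δ * cellNorm vol q (f n) :=
  mul_nonneg h.timeStep_nonneg (cellNorm_nonneg (fun K => (h.vol_pos K).le) q (f n))

lemma cellNorm_succ_le (h : IsNonnegTransport vol δ N p f ρ) (hq : 1 < q) (hκ : 0 < κ) {n : ℕ}
    (hn : n < N) (hlam0 : 0 ≤ lam n)
    (hlam : ∀ K, -(δ * netOutflow (p n) 1 K) ≤ lam n * vol K)
    (hκlam : (q - 1) / q * lam n ≤ (κ - 1) / κ) :
    cellNorm vol q (ρ (n + 1))
      ≤ Real.exp (κ * ((q - 1) / q * lam n))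
        * (cellNorm vol q (ρ n) + δ * cellNorm vol q (f n)) := by
  have hvol (K : ι) : 0 ≤ vol K := (h.vol_pos K).le
  have hcoef : 0 ≤ (q - 1) / q := div_nonneg (by linarith) (by positivity)
  calc cellNorm vol q (ρ (n + 1))
      ≤ cellNorm vol q (ρ (n + 1))
          * (Real.exp (κ * ((q - 1) / q * lam n)) * (1 - (q - 1) / q * lam n)) :=
        le_mul_of_one_le_right (cellNorm_nonneg hvol _ _)
          (one_le_exp_mul_one_sub hκ (mul_nonneg hcoef hlam0) hκlam)
    _ = Real.exp (κ * ((q - 1) / q * lam n))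
          * (cellNorm vol q (ρ (n + 1)) * (1 - (q - 1) / q * lam n)) := mul_left_comm _ _ _
    _ ≤ _ := mul_le_mul_of_nonneg_left ((h.step n hn).cellNorm_mul_one_sub_le hq hvol
        h.timeStep_nonneg (h.rate_nonneg n hn) (h.nonneg hn) hlam) (Real.exp_pos _).le

lemma cellNorm_le (h : IsNonnegTransport vol δ N p f ρ) (hq : 1 < q) (hκ : 0 < κ)
    (hlam0 : ∀ n < N, 0 ≤ lam n)
    (hlam : ∀ n < N, ∀ K, -(δ * netOutflow (p n) 1 K) ≤ lam n * vol K)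
    (hκlam : ∀ n < N, (q - 1) / q * lam n ≤ (κ - 1) / κ) {n : ℕ} (hn : n ≤ N) :
    cellNorm vol q (ρ n) ≤ Real.exp (∑ i ∈ range N, κ * ((q - 1) / q * lam i))
      * (cellNorm vol q (ρ 0) + ∑ i ∈ range N, δ * cellNorm vol q (f i)) := by
  have hcoef : 0 ≤ (q - 1) / q := div_nonneg (by linarith) (by positivity)
  exact le_exp_sum_range_mul_of_le_exp_mul_add (x := fun n => cellNorm vol q (ρ n))
    (cellNorm_nonneg (fun K => (h.vol_pos K).le) q _)
    (fun i hi => mul_nonneg hκ.le (mul_nonneg hcoef (hlam0 i hi)))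
    (fun i _ => h.timeStep_mul_cellNorm_nonneg i)
    (fun i hi => h.cellNorm_succ_le hq hκ hi (hlam0 i hi) (hlam i hi) (hκlam i hi)) hn

theorem sum_energy_le (h : IsNonnegTransport vol δ N p f ρ) (hq1 : 1 < q) (hq2 : q ≤ 2)
    (hκ : 0 < κ) (hlam0 : ∀ n < N, 0 ≤ lam n)
    (hlam : ∀ n < N, ∀ K, -(δ * netOutflow (p n) 1 K) ≤ lam n * vol K)
    (hκlam : ∀ n < N, (q - 1) / q * lam n ≤ (κ - 1) / κ) :
    rpowCoercivity q / 2 * (∑ n ∈ range N, temporalEnergy vol q (ρ n) (ρ (n + 1))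
        + δ * ∑ n ∈ range N, spatialEnergy (p n) q (ρ (n + 1)))
      ≤ (1 + q) * Real.exp (∑ n ∈ range N, lam n) ^ (κ * (q - 1)) * (1 + ∑ n ∈ range N, lam n)
        * (cellNorm vol q (ρ 0) + ∑ n ∈ range N, δ * cellNorm vol q (f n)) ^ q := by
  have hvol (K : ι) : 0 ≤ vol K := (h.vol_pos K).le
  have hnorm (n : ℕ) : 0 ≤ cellNorm vol q (ρ n) := cellNorm_nonneg hvol q _
  have hsource (n : ℕ) : 0 ≤ δ * cellNorm vol q (f n) := h.timeStep_mul_cellNorm_nonneg n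
  have hcoef : 0 ≤ (q - 1) / q := div_nonneg (by linarith) (by positivity)
  set A := cellNorm vol q (ρ 0) + ∑ n ∈ range N, δ * cellNorm vol q (f n)
  set E := Real.exp (∑ n ∈ range N, κ * ((q - 1) / q * lam n)) with hE
  have hsourceA : ∑ n ∈ range N, δ * cellNorm vol q (f n) ≤ A :=
    le_add_of_nonneg_left (hnorm 0)
  have hA : 0 ≤ A := (sum_nonneg fun n _ => hsource n).trans hsourceA
  have hE1 : 1 ≤ E := Real.one_le_exp <| sum_nonneg fun n hn =>
    mul_nonneg hκ.le (mul_nonneg hcoef (hlam0 n (mem_range.1 hn)))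
  have hEq : E ^ q = Real.exp (∑ n ∈ range N, lam n) ^ (κ * (q - 1)) := by
    rw [hE, ← mul_sum, ← mul_sum, ← Real.exp_mul, ← Real.exp_mul]
    congr 1
    field_simp
  have henergy := sum_le_of_rpow_recursion hq1.le (fun n _ => hnorm n) (fun n _ => hsource n) hlam0
    (fun n hn => h.cellNorm_le hq1 hκ hlam0 hlam hκlam hn)
    (hsourceA.trans (le_mul_of_one_le_left hA hE1)) fun n hn =>
      (h.step n hn).energy_le hq1 hq2 hvol h.timeStep_nonneg (h.rate_nonneg n hn)
        (h.nonneg hn.le) (h.nonneg hn) (hlam n hn)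
  rw [← mul_sum, sum_add_distrib, ← mul_sum, Real.mul_rpow (Real.exp_pos _).le hA, hEq] at henergy
  exact henergy.trans_eq (by ring)

end IsNonnegTransport

section Upwind

variable {ι : Type*} {vol : ι → ℝ} {edge u : ι → ι → ℝ}

/-- The rate at which the upwind flux carries mass from `K` to `L`, per unit density in `K`. -/
def upwindRate (edge u : ι → ι → ℝ) (K L : ι) : ℝ := edge K L * max (u K L) 0

lemma upwindRate_nonneg (hedge : ∀ K L, 0 ≤ edge K L) (K L : ι) : 0 ≤ upwindRate edge u K L :=
  mul_nonneg (hedge K L) (le_max_right _ _)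

lemma upwindRate_swap (hsym : ∀ K L, edge K L = edge L K) (hanti : ∀ K L, u K L = -u L K)
    (K L : ι) : upwindRate edge u L K = edge K L * max (-u K L) 0 := by
  rw [upwindRate, hsym L K, hanti L K]

lemma upwindRate_sub_swap (hsym : ∀ K L, edge K L = edge L K) (hanti : ∀ K L, u K L = -u L K)
    (K L : ι) : upwindRate edge u K L - upwindRate edge u L K = edge K L * u K L := by
  rw [upwindRate_swap hsym hanti K L, upwindRate, ← mul_sub, max_zero_sub_max_neg_zero_eq_self]

lemma upwindRate_add_swap (hsym : ∀ K L, edge K L = edge L K) (hanti : ∀ K L, u K L = -u L K)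
    (K L : ι) : upwindRate edge u K L + upwindRate edge u L K = edge K L * |u K L| := by
  rw [upwindRate_swap hsym hanti K L, upwindRate, ← mul_add, max_zero_add_max_neg_zero_eq_abs_self]

variable [Fintype ι] [DecidableEq ι]

lemma netOutflow_upwindRate_one (hsym : ∀ K L, edge K L = edge L K)
    (hanti : ∀ K L, u K L = -u L K) (K : ι) :
    netOutflow (upwindRate edge u) 1 K = ∑ L ∈ univ.erase K, edge K L * u K L := by
  have hdiag : edge K K * u K K = 0 := by rw [self_eq_neg.1 (hanti K K), mul_zero]
  simp only [netOutflow, Pi.one_apply, mul_one, upwindRate_sub_swap hsym hanti]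
  exact (sum_erase (f := fun L => edge K L * u K L) univ hdiag).symm

lemma netOutflow_upwindRate (hvol : ∀ K, 0 < vol K) (hsym : ∀ K L, edge K L = edge L K)
    (hanti : ∀ K L, u K L = -u L K) (r : ι → ℝ) (K : ι) :
    netOutflow (upwindRate edge u) r K = vol K * ∑ L ∈ univ.erase K, edge K L / vol K *
      (max (u K L) 0 * r K - max (-u K L) 0 * r L) := by
  have hne : vol K ≠ 0 := (hvol K).ne'
  rw [netOutflow, ← sum_erase univ (a := K) (sub_self _), mul_sum]
  refine sum_congr rfl fun L _ => ?_
  rw [upwindRate_swap hsym hanti K L, upwindRate]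
  field_simp

lemma isImplicitStep_upwindRate (hvol : ∀ K, 0 < vol K) (hsym : ∀ K L, edge K L = edge L K)
    (hanti : ∀ K L, u K L = -u L K) {δ : ℝ} (hδ : δ ≠ 0) {f s r : ι → ℝ}
    (hstep : ∀ K, (r K - s K) / δ + ∑ L ∈ univ.erase K, edge K L / vol K *
      (max (u K L) 0 * r K - max (-u K L) 0 * r L) = f K) :
    IsImplicitStep vol δ (upwindRate edge u) f s r := by
  intro K
  rw [netOutflow_upwindRate hvol hsym hanti, ← hstep K]
  field_simp

lemma neg_mul_netOutflow_upwindRate_one_le [Nonempty ι] (hvol : ∀ K, 0 < vol K)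
    (hsym : ∀ K L, edge K L = edge L K) (hanti : ∀ K L, u K L = -u L K) {δ : ℝ} (hδ : 0 ≤ δ)
    (K : ι) :
    -(δ * netOutflow (upwindRate edge u) 1 K) ≤ δ * univ.sup' univ_nonempty
      (fun K => max (-((∑ L ∈ univ.erase K, edge K L * u K L) / vol K)) 0) * vol K := by
  rw [netOutflow_upwindRate_one hsym hanti]
  calc -(δ * ∑ L ∈ univ.erase K, edge K L * u K L)
      = δ * -((∑ L ∈ univ.erase K, edge K L * u K L) / vol K) * vol K := by
        have hne : vol K ≠ 0 := (hvol K).ne'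
        field_simp
    _ ≤ _ := by
        gcongr
        · exact (hvol K).le
        · exact (le_max_left _ _).trans (le_sup' (fun K =>
            max (-((∑ L ∈ univ.erase K, edge K L * u K L) / vol K)) 0) (mem_univ K))

lemma spatialEnergy_upwindRate (hsym : ∀ K L, edge K L = edge L K)
    (hanti : ∀ K L, u K L = -u L K) (q : ℝ) (r : ι → ℝ) :
    spatialEnergy (upwindRate edge u) q r = ∑ K, ∑ L ∈ univ.erase K, edge K L * |u K L| *
      ((r K + r L) / 2) ^ (q - 2) * (r K - r L) ^ 2 := by
  refine sum_congr rfl fun K _ => ?_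
  rw [sum_erase univ (by simp)]
  refine sum_congr rfl fun L _ => ?_
  rw [upwindRate_add_swap hsym hanti, rpowJump, ← mul_assoc]

end Upwind

/-- **Discrete energy estimate for the implicit upwind scheme.**
For `q̄ ∈ (1,2]` there is a constant `C > 0`, depending only on `q̄`, such that in any
discrete upwind setting with `N` time steps, nonnegative data, `κ > 1`, time step
`δ > 0`, `λⁿ := δ · max_K ((div uⁿ)_K)⁻`, `Λ := exp(∑ₙ λⁿ)` and
`((q̄−1)/q̄) λⁿ ≤ (κ−1)/κ` for all `n < N`, the discrete temporal and spatial energies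
are bounded by `C Λ^{κ(q̄−1)} (1 + ∑ₙ λⁿ)(‖ρ⁰‖_{ℓ^{q̄}} + ∑ₙ δ‖fⁿ‖_{ℓ^{q̄}})^{q̄}`.
(Summands whose two `ρ`-values vanish are `0` since `0 ^ s = 0` for `s ≠ 0` in `rpow`.) -/
theorem upwind_energy_estimate (qb : ℝ) (hqb1 : 1 < qb) (hqb2 : qb ≤ 2) :
    ∃ C : ℝ, 0 < C ∧
      ∀ (ι : Type) [Fintype ι] [Nonempty ι] [DecidableEq ι]
        (vol : ι → ℝ), (∀ K, 0 < vol K) →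
      ∀ (edge : ι → ι → ℝ), (∀ K L, edge K L = edge L K) → (∀ K L, 0 ≤ edge K L) →
      ∀ (u : ℕ → ι → ι → ℝ), (∀ n K L, u n K L = - u n L K) →
        (∀ n K L, edge K L = 0 → u n K L = 0) →
      ∀ (κ δ : ℝ), 1 < κ → 0 < δ →
      ∀ (N : ℕ) (ρ f : ℕ → ι → ℝ),
        (∀ K, 0 ≤ ρ 0 K) → (∀ n K, 0 ≤ f n K) →
        (∀ n < N, ∀ K : ι,
          (ρ (n+1) K - ρ n K) / δ +
            ∑ L ∈ univ.erase K, edge K L / vol K *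
              (max (u n K L) 0 * ρ (n+1) K - max (-u n K L) 0 * ρ (n+1) L) = f n K) →
      ∀ (lam : ℕ → ℝ),
        (∀ n, lam n = δ * univ.sup' univ_nonempty
          (fun K => max (-((∑ L ∈ univ.erase K, edge K L * u n K L) / vol K)) 0)) →
        (∀ n < N, (qb - 1)/qb * lam n ≤ (κ - 1)/κ) →
      (∑ n ∈ Finset.range N, ∑ K, vol K *
          ((ρ (n+1) K + ρ n K)/2) ^ (qb - 2) * (ρ (n+1) K - ρ n K)^2)
        + δ * ∑ n ∈ Finset.range N, ∑ K, ∑ L ∈ univ.erase K,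
            edge K L * |u n K L| *
              ((ρ (n+1) K + ρ (n+1) L)/2) ^ (qb - 2) * (ρ (n+1) K - ρ (n+1) L)^2
      ≤ C * (Real.exp (∑ n ∈ Finset.range N, lam n)) ^ (κ * (qb - 1)) *
          (1 + ∑ n ∈ Finset.range N, lam n) *
          ((∑ K, vol K * |ρ 0 K| ^ qb) ^ (1/qb) +
            ∑ n ∈ Finset.range N, δ * (∑ K, vol K * |f n K| ^ qb) ^ (1/qb)) ^ qb := by
  have hc : 0 < rpowCoercivity qb / 2 := half_pos (rpowCoercivity_pos hqb1)
  refine ⟨(1 + qb) / (rpowCoercivity qb / 2), by positivity, ?_⟩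
  intro ι _ _ _ vol hvol edge hsym hedge u hanti _ κ δ hκ hδ N ρ f hρ hf hstep lam hlam hκlam
  have htransport : IsNonnegTransport vol δ N (fun n => upwindRate edge (u n)) f ρ :=
    { vol_pos := hvol
      timeStep_nonneg := hδ.le
      rate_nonneg := fun _ _ => upwindRate_nonneg hedge
      source_nonneg := fun n _ => hf n
      init_nonneg := hρ
      step := fun n hn => isImplicitStep_upwindRate hvol hsym (hanti n) hδ.ne' (hstep n hn) }
  have hlam0 (n : ℕ) : 0 ≤ lam n := by
    rw [hlam]
    exact mul_nonneg hδ.le <|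
      (le_sup'_iff _).2 ⟨Classical.arbitrary ι, mem_univ _, le_max_right _ _⟩
  have hcompression (n : ℕ) (K : ι) :
      -(δ * netOutflow (upwindRate edge (u n)) 1 K) ≤ lam n * vol K :=
    hlam n ▸ neg_mul_netOutflow_upwindRate_one_le hvol hsym (hanti n) hδ.le K
  have henergy := htransport.sum_energy_le hqb1 hqb2 (zero_lt_one.trans hκ) (fun n _ => hlam0 n)
    (fun n _ => hcompression n) hκlam
  simp only [spatialEnergy_upwindRate hsym (hanti _), temporalEnergy, rpowJump, ← mul_assoc,
    cellNorm] at henergy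
  rw [div_mul_eq_mul_div, div_mul_eq_mul_div, div_mul_eq_mul_div, le_div_iff₀' hc]
  exact henergy
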